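/- (Theorem 1, feasibility.) Assume the Dirichlet-measurement setting described in the context, with θ₁ ∈ (0, π/2]. Assume additionally that sup_{n≥1} |φₙ(0)| < ∞ and Σ_{n≥1} φₙ(0)²/λₙ < ∞. Let K ∈ ℝ^{1×N₀} and L ∈ ℝ^{N₀} be such that every complex eigenvalue μ of F₁ satisfies Re μ < −|c|, and fix α₁, α₂, α₃, α₄ > 0 with 𝔠 := 1 − ½(|c|/α₁ + 1/α₂ + 1/α₃ + |c|/α₄) > 0. Then there exists N₁ ≥ N₀ + 1 such that for every N ≥ N₁ there exist a symmetric positive definite matrix P, symmetric positive semidefinite matrices Q₁, Q₂, and reals r₁, r₂, β, γ > 0 satisfying Ψ ≺ 0, Θ₁ ≺ 0, Θ₂ ≺ 0, Θ₃ < 0, and Θ₄ < 0. -/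

import Mathlib

open Real Set Matrix MeasureTheory

noncomputable section

/-- One-sided/within derivative on the spatial interval `[0,1]`. -/
def dI (f : ℝ → ℝ) (x : ℝ) : ℝ := derivWithin f (Set.Icc 0 1) x

/-- `L²(0,1)` inner product. -/
def ip (f g : ℝ → ℝ) : ℝ := ∫ x in (0:ℝ)..1, f x * g x

/-- The lifting function `a(x) = (2p(x) + 2xp'(x) - x²q̃(x))/(cos θ₂ + 2 sin θ₂)`. -/
def aFun (p qt : ℝ → ℝ) (θ₂ : ℝ) (x : ℝ) : ℝ :=
  (2 * p x + 2 * x * dI p x - x ^ 2 * qt x) / (Real.cos θ₂ + 2 * Real.sin θ₂)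

/-- The lifting function `b(x) = -x²/(cos θ₂ + 2 sin θ₂)`. -/
def bFun (θ₂ : ℝ) (x : ℝ) : ℝ := -x ^ 2 / (Real.cos θ₂ + 2 * Real.sin θ₂)

/-- Input coefficient `βₙ = aₙ + (-λₙ + q_c) bₙ`. -/
def betaC (p qt : ℝ → ℝ) (θ₂ q_c : ℝ) (lam : ℕ → ℝ) (phi : ℕ → ℝ → ℝ) (n : ℕ) : ℝ :=
  ip (aFun p qt θ₂) (phi n) + (-lam n + q_c) * ip (bFun θ₂) (phi n)

/-- Squared `L²`-norm `‖R_N f‖² = Σ_{n≥N+1} ⟨f,φₙ⟩²` of the residual `R_N f`. -/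
def RN2 (f : ℝ → ℝ) (phi : ℕ → ℝ → ℝ) (N : ℕ) : ℝ := ∑' k : ℕ, (ip f (phi (N + 1 + k)))^2

/-- `A₀ = diag(-λ₁+q_c, …, -λ_{N₀}+q_c)`. -/
def A0 (N₀ : ℕ) (lam : ℕ → ℝ) (q_c : ℝ) : Matrix (Fin N₀) (Fin N₀) ℝ :=
  Matrix.diagonal fun i => -lam (i.val + 1) + q_c

/-- `F₃ = A₁ = diag(-λ_{N₀+1}+q_c, …, -λ_N+q_c)`. -/
def A1 (N₀ N : ℕ) (lam : ℕ → ℝ) (q_c : ℝ) : Matrix (Fin (N - N₀)) (Fin (N - N₀)) ℝ :=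
  Matrix.diagonal fun i => -lam (N₀ + i.val + 1) + q_c

/-- `𝔅₀ = (β₁,…,β_{N₀})ᵀ`. -/
def B0 (N₀ : ℕ) (p qt : ℝ → ℝ) (θ₂ q_c : ℝ) (lam : ℕ → ℝ) (phi : ℕ → ℝ → ℝ) :
    Fin N₀ → ℝ :=
  fun i => betaC p qt θ₂ q_c lam phi (i.val + 1)

/-- `F₁ = [[A₀+𝔅₀K, LC₀],[0, A₀-LC₀]]`. -/
def F1 (N₀ : ℕ) (lam : ℕ → ℝ) (q_c : ℝ) (B0v C0v K L : Fin N₀ → ℝ) :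
    Matrix (Fin N₀ ⊕ Fin N₀) (Fin N₀ ⊕ Fin N₀) ℝ :=
  Matrix.fromBlocks (A0 N₀ lam q_c + Matrix.vecMulVec B0v K) (Matrix.vecMulVec L C0v) 0
    (A0 N₀ lam q_c - Matrix.vecMulVec L C0v)

/-- `F₂ = [LC̃₁; -LC̃₁]`. -/
def F2 (N₀ N : ℕ) (L : Fin N₀ → ℝ) (Ct : Fin (N - N₀) → ℝ) :
    Matrix (Fin N₀ ⊕ Fin N₀) (Fin (N - N₀)) ℝ :=
  Matrix.of fun i j => Sum.elim (fun a' => L a' * Ct j) (fun a' => -(L a' * Ct j)) i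

/-- `ℒ = col(L,-L)`. -/
def Lv (N₀ : ℕ) (L : Fin N₀ → ℝ) : Fin N₀ ⊕ Fin N₀ → ℝ := Sum.elim L fun a' => -L a'

/-- `K̃ = [K 0]`. -/
def Kt (N₀ : ℕ) (K : Fin N₀ → ℝ) : Fin N₀ ⊕ Fin N₀ → ℝ := Sum.elim K 0

/-- Index type of the matrix `Ψ` (blocks of sizes `2N₀`, `N-N₀`, `1`). -/
abbrev SIdx (N₀ N : ℕ) := ((Fin N₀ ⊕ Fin N₀) ⊕ Fin (N - N₀)) ⊕ Unit

/-- The row vector `E = K̃ [F₁ F₂ ℒ]`. -/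
def Erow (N₀ N : ℕ) (F1m : Matrix (Fin N₀ ⊕ Fin N₀) (Fin N₀ ⊕ Fin N₀) ℝ)
    (F2m : Matrix (Fin N₀ ⊕ Fin N₀) (Fin (N - N₀)) ℝ)
    (Lvv Ktv : Fin N₀ ⊕ Fin N₀ → ℝ) : SIdx N₀ N → ℝ :=
  Sum.elim (Sum.elim (Matrix.vecMul Ktv F1m) (Matrix.vecMul Ktv F2m)) fun _ => Ktv ⬝ᵥ Lvv

/-- The matrix `Ψ` of the LMI conditions. -/
def PsiM (N₀ N : ℕ)
    (P Q1 F1m : Matrix (Fin N₀ ⊕ Fin N₀) (Fin N₀ ⊕ Fin N₀) ℝ)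
    (Q2 F3m : Matrix (Fin (N - N₀)) (Fin (N - N₀)) ℝ)
    (F2m : Matrix (Fin N₀ ⊕ Fin N₀) (Fin (N - N₀)) ℝ)
    (Lvv Ktv : Fin N₀ ⊕ Fin N₀ → ℝ) (E : SIdx N₀ N → ℝ)
    (c r₁ βs γ α₂ α₃ RNa2 RNb2 : ℝ) : Matrix (SIdx N₀ N) (SIdx N₀ N) ℝ :=
  Matrix.fromBlocks
    (Matrix.fromBlocks
      (F1mᵀ * P + P * F1m + |c| • P + Q1 + (α₂ * γ * RNa2) • Matrix.vecMulVec Ktv Ktv)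
      (P * F2m)
      ((P * F2m)ᵀ)
      (r₁ • ((2:ℝ) • F3m + |c| • (1 : Matrix (Fin (N - N₀)) (Fin (N - N₀)) ℝ)) + Q2))
    (Matrix.of fun i (_ : Unit) => Sum.elim (P.mulVec Lvv) (fun _ => 0) i)
    (Matrix.of fun (_ : Unit) j => Sum.elim (P.mulVec Lvv) (fun _ => 0) j)
    (Matrix.of fun _ _ => -βs)
  + (2 * α₃ * γ * RNb2) • Matrix.vecMulVec E E

/-- The matrix `Θ₁`. -/
def Theta1 (N₀ : ℕ) (P Q1 : Matrix (Fin N₀ ⊕ Fin N₀) (Fin N₀ ⊕ Fin N₀) ℝ)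
    (Ktv : Fin N₀ ⊕ Fin N₀ → ℝ) (c γ α₃ α₄ RNb2 : ℝ) :
    Matrix (Fin N₀ ⊕ Fin N₀) (Fin N₀ ⊕ Fin N₀) ℝ :=
  |c| • P - Q1 + ((2*α₃*|c| + α₄) * γ * |c| * RNb2) • Matrix.vecMulVec Ktv Ktv

/-- The matrix `Θ₂`. -/
def Theta2 (N₀ N : ℕ) (Q2 : Matrix (Fin (N - N₀)) (Fin (N - N₀)) ℝ) (r₁ c : ℝ) :
    Matrix (Fin (N - N₀)) (Fin (N - N₀)) ℝ :=
  (r₁ * |c|) • (1 : Matrix (Fin (N - N₀)) (Fin (N - N₀)) ℝ) - Q2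

/-!
A Hurwitz element `b` of a C⋆-algebra has the Cayley transform `m = (b + 1)(b - 1)⁻¹`, whose
spectrum lies in the open unit disc. Then `p = ∑_{j<k} (m⋆)ʲ mʲ` with `‖mᵏ‖ < 1` satisfies
`p - m⋆ p m > 0`, and conjugating by `b - 1` turns this into the Lyapunov inequality
`b⋆ p + p b < 0`. For `F₁ + |c|` the entrywise real part of `p` is the matrix `P`, scaled to make
the inequality as coercive as needed.

Since `F₂ = ℒ C̃₁`, the off-diagonal blocks of `Ψ` have rank one and are dominated by the diagonal
ones as soon as `r₁` and `β` exceed constants depending only on `P`, `ℒ` and `∑ φₙ(0)² / λₙ`. So all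
parameters can be fixed independently of `N`, with `γ = 1`: as `N → ∞` the terms carrying `‖R_N a‖²`
and `‖R_N b‖²` vanish, and `-2𝔠λ_{N+1} → -∞` dominates `Θ₄`.
-/

section Lyapunov

theorem exists_norm_pow_lt_one_of_spectrum {A : Type*} [NormedRing A] [NormedAlgebra ℂ A]
    [CompleteSpace A] (a : A) (ha : ∀ z ∈ spectrum ℂ a, ‖z‖ < 1) :
    ∃ k : ℕ, 0 < k ∧ ‖a ^ k‖ < 1 := by
  rcases subsingleton_or_nontrivial A with _ | _
  · exact ⟨1, one_pos, by simp [Subsingleton.elim (a ^ 1) 0]⟩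
  have hr : spectralRadius ℂ a < (1 : NNReal) :=
    spectrum.spectralRadius_lt_of_forall_lt a fun z hz => by
      simpa [← NNReal.coe_lt_coe] using ha z hz
  obtain ⟨k, hk, hk0⟩ :=
    (((spectrum.pow_nnnorm_pow_one_div_tendsto_nhds_spectralRadius a).eventually_lt_const hr).and
      (Filter.eventually_gt_atTop 0)).exists
  refine ⟨k, hk0, ?_⟩
  by_contra! h
  have h1 : (1 : ENNReal) ≤ (‖a ^ k‖₊ : ENNReal) := by
    rw [ENNReal.one_le_coe_iff, ← NNReal.coe_le_coe]
    simpa using h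
  refine absurd hk (not_lt.mpr ?_)
  simpa using ENNReal.one_le_rpow h1 (by positivity : (0 : ℝ) < 1 / k)

theorem re_add_one_div_sub_one (z : ℂ) :
    ((z + 1) / (z - 1)).re = (‖z‖ ^ 2 - 1) / ‖z - 1‖ ^ 2 := by
  rw [Complex.div_re, ← add_div, Complex.sq_norm (z - 1), Complex.sq_norm, Complex.normSq_apply z]
  congr 1
  simp only [Complex.add_re, Complex.sub_re, Complex.add_im, Complex.sub_im, Complex.one_re,
    Complex.one_im]
  ring

theorem add_one_div_sub_one_mem_spectrum {A : Type*} [Ring A] [Algebra ℂ A] {b : A} {d : Aˣ}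
    (hd : (d : A) = b - 1) {z : ℂ} (hz : z ∈ spectrum ℂ ((b + 1) * ↑d⁻¹)) :
    z ≠ 1 ∧ (z + 1) / (z - 1) ∈ spectrum ℂ b := by
  have hfactor : algebraMap ℂ A z - (b + 1) * ↑d⁻¹ = (z • (b - 1) - (b + 1)) * ↑d⁻¹ := by
    rw [sub_mul, smul_mul_assoc, ← hd, Units.mul_inv, Algebra.algebraMap_eq_smul_one]
  have hnot : ¬ IsUnit (z • (b - 1) - (b + 1)) := fun h => hz <| by
    rw [spectrum.mem_resolventSet_iff, hfactor]
    exact h.mul (Units.isUnit _)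
  have hz1 : z ≠ 1 := by
    rintro rfl
    have : (1 : ℂ) • (b - 1) - (b + 1) = algebraMap ℂ A (-2) := by
      rw [Algebra.algebraMap_eq_smul_one]
      module
    exact hnot (this ▸ (isUnit_iff_ne_zero.mpr (by norm_num : (-2 : ℂ) ≠ 0)).map _)
  have hsub : z - 1 ≠ 0 := sub_ne_zero.mpr hz1
  refine ⟨hz1, fun h => hnot ?_⟩
  have : z • (b - 1) - (b + 1)
      = algebraMap ℂ A (-(z - 1)) * (algebraMap ℂ A ((z + 1) / (z - 1)) - b) := by
    simp only [Algebra.algebraMap_eq_smul_one, smul_mul_assoc, one_mul, smul_sub, smul_smul]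
    rw [neg_mul, mul_div_cancel₀ _ hsub]
    module
  exact this ▸ ((isUnit_iff_ne_zero.mpr (neg_ne_zero.mpr hsub)).map _).mul h

theorem norm_lt_one_of_mem_spectrum_cayley {A : Type*} [Ring A] [Algebra ℂ A] {b : A} {d : Aˣ}
    (hd : (d : A) = b - 1) (hb : ∀ z ∈ spectrum ℂ b, z.re < 0) {z : ℂ}
    (hz : z ∈ spectrum ℂ ((b + 1) * ↑d⁻¹)) : ‖z‖ < 1 := by
  obtain ⟨hz1, hmem⟩ := add_one_div_sub_one_mem_spectrum hd hz
  have hpos : 0 < ‖z - 1‖ ^ 2 := by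
    have := norm_pos_iff.mpr (sub_ne_zero.mpr hz1)
    positivity
  have hre := hb _ hmem
  rw [re_add_one_div_sub_one, div_lt_iff₀ hpos, zero_mul, sub_neg] at hre
  exact (sq_lt_one_iff₀ (norm_nonneg z)).mp hre

theorem isUnit_sub_one_of_spectrum_re_neg {A : Type*} [Ring A] [Algebra ℂ A] {b : A}
    (hb : ∀ z ∈ spectrum ℂ b, z.re < 0) : IsUnit (b - 1) := by
  have h1 : (1 : ℂ) ∉ spectrum ℂ b := fun h => by simpa using (hb 1 h).not_gt
  rw [← IsUnit.neg_iff, neg_sub]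
  simpa using spectrum.notMem_iff.mp h1

theorem star_mul_stein_cayley_mul {A : Type*} [Ring A] [StarRing A] {b : A} {d : Aˣ}
    (hd : (d : A) = b - 1) (p : A) :
    star (d : A) * (p - star ((b + 1) * ↑d⁻¹) * p * ((b + 1) * ↑d⁻¹)) * d
      = 2 • -(star b * p + p * b) := by
  have hcancel : (b + 1) * ↑d⁻¹ * d = b + 1 := by simp [mul_assoc]
  calc star (d : A) * (p - star ((b + 1) * ↑d⁻¹) * p * ((b + 1) * ↑d⁻¹)) * d
      = star (d : A) * p * d - star ((b + 1) * ↑d⁻¹ * d) * p * ((b + 1) * ↑d⁻¹ * d) := by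
        rw [star_mul _ (d : A)]
        noncomm_ring
    _ = star (b - 1) * p * (b - 1) - star (b + 1) * p * (b + 1) := by rw [hcancel, hd]
    _ = 2 • -(star b * p + p * b) := by
        simp only [star_sub, star_add, star_one]
        noncomm_ring

theorem sum_star_pow_mul_pow_stein {A : Type*} [Ring A] [StarRing A] (m : A) (k : ℕ) :
    (∑ j ∈ Finset.range k, star (m ^ j) * m ^ j)
      - star m * (∑ j ∈ Finset.range k, star (m ^ j) * m ^ j) * m = 1 - star (m ^ k) * m ^ k := by
  rw [Finset.mul_sum, Finset.sum_mul, ← Finset.sum_sub_distrib]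
  simpa [pow_succ, mul_assoc] using
    Finset.sum_range_sub' (fun j => star (m ^ j) * m ^ j) k

variable {A : Type*} [CStarAlgebra A] [PartialOrder A] [StarOrderedRing A]

theorem isStrictlyPositive_one_sub_star_mul_self {a : A} (ha : ‖a‖ < 1) :
    IsStrictlyPositive (1 - star a * a) := by
  have hpos : 0 < 1 - ‖a‖ ^ 2 := sub_pos.mpr (pow_lt_one₀ (norm_nonneg a) ha two_ne_zero)
  refine (isStrictlyPositive_algebraMap (A := A) hpos).of_le ?_
  rw [map_sub, map_one]
  exact sub_le_sub_left CStarAlgebra.star_mul_le_algebraMap_norm_sq 1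

theorem exists_isStrictlyPositive_stein {m : A} (hm : ∀ z ∈ spectrum ℂ m, ‖z‖ < 1) :
    ∃ p : A, IsStrictlyPositive p ∧ IsStrictlyPositive (p - star m * p * m) := by
  obtain ⟨k, hk, hlt⟩ := exists_norm_pow_lt_one_of_spectrum m hm
  refine ⟨∑ j ∈ Finset.range k, star (m ^ j) * m ^ j, ?_, ?_⟩
  · refine (isStrictlyPositive_one (A := A)).of_le ?_
    simpa using Finset.single_le_sum (f := fun j => star (m ^ j) * m ^ j)
      (fun j _ => star_mul_self_nonneg (m ^ j)) (Finset.mem_range.mpr hk)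
  · rw [sum_star_pow_mul_pow_stein]
    exact isStrictlyPositive_one_sub_star_mul_self hlt

theorem exists_isStrictlyPositive_lyapunov {b : A} (hb : ∀ z ∈ spectrum ℂ b, z.re < 0) :
    ∃ p : A, IsStrictlyPositive p ∧ IsStrictlyPositive (-(star b * p + p * b)) := by
  obtain ⟨d, hd⟩ := isUnit_sub_one_of_spectrum_re_neg hb
  obtain ⟨p, hp, hstein⟩ := exists_isStrictlyPositive_stein
    (m := (b + 1) * ↑d⁻¹) fun _ => norm_lt_one_of_mem_spectrum_cayley hd hb
  refine ⟨p, hp, ?_⟩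
  have h := (IsUnit.isStrictlyPositive_star_left_conjugate_iff d.isUnit).mpr hstein
  rw [star_mul_stein_cayley_mul hd] at h
  simpa [smul_smul, ← Nat.cast_smul_eq_nsmul ℝ] using h.smul (by norm_num : (0 : ℝ) < 1 / 2)

end Lyapunov

section MatrixLyapunov

open scoped Matrix.Norms.L2Operator MatrixOrder ComplexOrder

variable {m n k : Type*} [Fintype n]

theorem posDef_map_re {n : Type*} [Finite n] {P : Matrix n n ℂ} (hP : P.PosDef) :
    (P.map Complex.re).PosDef := by
  have := Fintype.ofFinite n
  refine PosDef.of_dotProduct_mulVec_pos ?_ fun v hv => ?_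
  · ext i j
    simpa using congrArg Complex.re (hP.isHermitian.apply i j)
  · have h := hP.dotProduct_mulVec_pos (x := fun i => (v i : ℂ)) ?_
    · have := (Complex.pos_iff.mp h).1
      simpa [dotProduct, mulVec, Complex.re_sum] using this
    · exact fun h0 => hv (funext fun i => by simpa using congrFun h0 i)

theorem map_re_mul_map_ofReal (M : Matrix m n ℂ) (B : Matrix n k ℝ) :
    (M * B.map Complex.ofReal).map Complex.re = M.map Complex.re * B := by
  ext i j
  simp [mul_apply, Complex.re_sum]

theorem map_ofReal_mul_map_re (B : Matrix m n ℝ) (M : Matrix n k ℂ) :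
    (B.map Complex.ofReal * M).map Complex.re = B * M.map Complex.re := by
  ext i j
  simp [mul_apply, Complex.re_sum]

theorem exists_posDef_lyapunov [DecidableEq n] {B : Matrix n n ℝ}
    (hB : ∀ z ∈ spectrum ℂ (B.map Complex.ofReal), z.re < 0) :
    ∃ P : Matrix n n ℝ, P.PosDef ∧ (-(Bᵀ * P + P * B)).PosDef := by
  obtain ⟨P, hP, hlyap⟩ :=
    exists_isStrictlyPositive_lyapunov (A := Matrix n n ℂ) hB
  rw [isStrictlyPositive_iff_posDef] at hP hlyap
  refine ⟨P.map Complex.re, posDef_map_re hP, ?_⟩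
  have h := posDef_map_re hlyap
  have hstar : star (B.map Complex.ofReal) = Bᵀ.map Complex.ofReal := by
    ext i j
    simp [star_apply]
  rw [hstar] at h
  convert h using 1
  rw [← map_re_mul_map_ofReal, ← map_ofReal_mul_map_re]
  ext i j
  simp

theorem spectrum_add_smul_one_map_ofReal_re_neg [DecidableEq n] {A : Matrix n n ℝ} {σ : ℝ}
    (hA : ∀ z ∈ spectrum ℂ (A.map Complex.ofReal), z.re < -σ) :
    ∀ z ∈ spectrum ℂ ((A + σ • (1 : Matrix n n ℝ)).map Complex.ofReal), z.re < 0 := by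
  intro z hz
  have hmap : (A + σ • (1 : Matrix n n ℝ)).map Complex.ofReal
      = algebraMap ℂ (Matrix n n ℂ) σ + A.map Complex.ofReal := by
    ext i j
    by_cases hij : i = j <;> simp [Matrix.algebraMap_matrix_apply, hij, add_comm]
  rw [hmap, ← sub_add_cancel z (σ : ℂ), spectrum.add_mem_add_iff] at hz
  simpa [sub_lt_iff_lt_add] using hA _ hz

theorem exists_pos_smul_one_le_of_posDef {n : Type*} [Finite n] [DecidableEq n] {M : Matrix n n ℝ}
    (hM : M.PosDef) : ∃ δ : ℝ, 0 < δ ∧ δ • (1 : Matrix n n ℝ) ≤ M := by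
  have := Fintype.ofFinite n
  rcases subsingleton_or_nontrivial (Matrix n n ℝ) with _ | _
  · exact ⟨1, one_pos, (Subsingleton.elim _ _).le⟩
  · simpa [Algebra.algebraMap_eq_smul_one] using
      (CFC.exists_pos_algebraMap_le_iff hM.isHermitian).mpr
        fun x hx => (hM.isStrictlyPositive.spectrum_pos hx)

theorem exists_posDef_smul_one_le_lyapunov [DecidableEq n] {A : Matrix n n ℝ} {σ : ℝ}
    (hA : ∀ z ∈ spectrum ℂ (A.map Complex.ofReal), z.re < -σ) {ρ : ℝ} (hρ : 0 < ρ) :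
    ∃ P : Matrix n n ℝ, P.PosDef ∧ ρ • 1 ≤ -(Aᵀ * P + P * A + (2 * σ) • P) := by
  obtain ⟨P, hP, hlyap⟩ := exists_posDef_lyapunov (spectrum_add_smul_one_map_ofReal_re_neg hA)
  obtain ⟨δ, hδ, hle⟩ := exists_pos_smul_one_le_of_posDef hlyap
  refine ⟨(ρ / δ) • P, hP.smul (div_pos hρ hδ), ?_⟩
  calc ρ • (1 : Matrix n n ℝ) = (ρ / δ) • δ • 1 := by rw [smul_smul, div_mul_cancel₀ _ hδ.ne']
    _ ≤ (ρ / δ) • -((A + σ • 1)ᵀ * P + P * (A + σ • 1)) :=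
      smul_le_smul_of_nonneg_left hle (div_pos hρ hδ).le
    _ = -(Aᵀ * ((ρ / δ) • P) + ((ρ / δ) • P) * A + (2 * σ) • (ρ / δ) • P) := by
      simp only [transpose_add, transpose_smul, transpose_one, add_mul, mul_add, smul_mul_assoc,
        mul_smul_comm, one_mul, mul_one]
      module

end MatrixLyapunov

section LoewnerOrder

open scoped MatrixOrder

theorem posDef_of_smul_one_le {n : Type*} [DecidableEq n] {M : Matrix n n ℝ} {κ : ℝ} (hκ : 0 < κ)
    (h : κ • 1 ≤ M) : M.PosDef := by
  simpa using (PosDef.one.smul hκ).add_posSemidef (Matrix.le_iff.mp h)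

variable {m n : Type*} [Fintype m] [Fintype n]

theorem dotProduct_sq_le (u v : n → ℝ) : (u ⬝ᵥ v) ^ 2 ≤ (u ⬝ᵥ u) * (v ⬝ᵥ v) := by
  simpa [dotProduct, sq] using Finset.sum_mul_sq_le_sq_mul_sq Finset.univ u v

variable [DecidableEq m] [DecidableEq n]

theorem smul_one_le_iff {M : Matrix n n ℝ} {κ : ℝ} :
    κ • 1 ≤ M ↔ M.IsHermitian ∧ ∀ v : n → ℝ, κ * (v ⬝ᵥ v) ≤ v ⬝ᵥ (M *ᵥ v) := by
  have hone : (κ • (1 : Matrix n n ℝ)).IsHermitian := isHermitian_one.smul (.all κ)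
  rw [Matrix.le_iff, posSemidef_iff_dotProduct_mulVec]
  refine and_congr ⟨fun h => by simpa using h.add hone, fun h => h.sub hone⟩
    (forall_congr' fun v => ?_)
  simp [sub_mulVec, smul_mulVec]

theorem smul_vecMulVec_self_le (s : ℝ) (u : n → ℝ) :
    s • vecMulVec u u ≤ (|s| * (u ⬝ᵥ u)) • 1 := by
  rw [← neg_le_neg_iff, ← neg_smul, smul_one_le_iff]
  refine ⟨?_, fun v => ?_⟩
  · ext i j
    simp [vecMulVec_apply, mul_comm]
  · have hle : s * (u ⬝ᵥ v) ^ 2 ≤ |s| * ((u ⬝ᵥ u) * (v ⬝ᵥ v)) :=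
      mul_le_mul (le_abs_self s) (dotProduct_sq_le u v) (sq_nonneg _) (abs_nonneg s)
    simp only [neg_mulVec, smul_mulVec, vecMulVec_mulVec, op_smul_eq_smul, dotProduct_neg,
      dotProduct_smul, smul_eq_mul, dotProduct_comm v u]
    linarith

theorem sub_smul_one_le_sub_smul_vecMulVec_self {M : Matrix n n ℝ} {κ s ε : ℝ} {u : n → ℝ}
    (hM : κ • 1 ≤ M) (hs : |s| * (u ⬝ᵥ u) ≤ ε) : (κ - ε) • 1 ≤ M - s • vecMulVec u u := by
  rw [sub_smul]
  exact sub_le_sub hM ((smul_vecMulVec_self_le s u).trans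
    (smul_le_smul_of_nonneg_right hs zero_le_one))

theorem add_add_two_mul_nonneg_of_sq_le_mul {p q t : ℝ} (hp : 0 ≤ p) (hq : 0 ≤ q)
    (ht : t ^ 2 ≤ p * q) : 0 ≤ p + q + 2 * t := by
  have := abs_le_of_sq_le_sq' (by nlinarith [sq_nonneg (p - q)] : (2 * t) ^ 2 ≤ (p + q) ^ 2)
    (add_nonneg hp hq)
  linarith [this.1]

theorem smul_one_le_fromBlocks_vecMulVec {A : Matrix m m ℝ} {D : Matrix n n ℝ} {g : m → ℝ}
    {h : n → ℝ} {κ δ d : ℝ} (hA : δ • 1 ≤ A) (hD : d • 1 ≤ D) (hδ : κ ≤ δ) (hd : κ ≤ d)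
    (hgh : (g ⬝ᵥ g) * (h ⬝ᵥ h) ≤ (δ - κ) * (d - κ)) :
    κ • 1 ≤ fromBlocks A (vecMulVec g h) (vecMulVec h g) D := by
  rw [smul_one_le_iff] at hA hD ⊢
  refine ⟨hA.1.fromBlocks (by ext; simp [vecMulVec_apply, mul_comm]) hD.1, fun v => ?_⟩
  obtain ⟨x, y, rfl⟩ : ∃ x y, v = Sum.elim x y := ⟨_, _, (Sum.elim_comp_inl_inr v).symm⟩
  have hx : 0 ≤ x ⬝ᵥ x := by simpa using dotProduct_star_self_nonneg x
  have hy : 0 ≤ y ⬝ᵥ y := by simpa using dotProduct_star_self_nonneg y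
  have hcross : ((g ⬝ᵥ x) * (h ⬝ᵥ y)) ^ 2
      ≤ ((δ - κ) * (x ⬝ᵥ x)) * ((d - κ) * (y ⬝ᵥ y)) :=
    calc ((g ⬝ᵥ x) * (h ⬝ᵥ y)) ^ 2
        ≤ ((g ⬝ᵥ g) * (x ⬝ᵥ x)) * ((h ⬝ᵥ h) * (y ⬝ᵥ y)) := by
          rw [mul_pow]
          exact mul_le_mul (dotProduct_sq_le g x) (dotProduct_sq_le h y) (sq_nonneg _)
            ((sq_nonneg _).trans (dotProduct_sq_le g x))
      _ ≤ _ := by nlinarith [mul_le_mul_of_nonneg_right hgh (mul_nonneg hx hy)]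
  have hsum := add_add_two_mul_nonneg_of_sq_le_mul (mul_nonneg (sub_nonneg.mpr hδ) hx)
    (mul_nonneg (sub_nonneg.mpr hd) hy) hcross
  simp only [fromBlocks_mulVec, Sum.elim_comp_inl, Sum.elim_comp_inr,
    sumElim_dotProduct_sumElim, dotProduct_add, vecMulVec_mulVec, op_smul_eq_smul,
    dotProduct_smul, smul_eq_mul, dotProduct_comm x g, dotProduct_comm y h]
  linarith [hA.2 x, hD.2 y]

theorem smul_one_le_diagonal {n : Type*} [DecidableEq n] {f : n → ℝ} {κ : ℝ}
    (hf : ∀ i, κ ≤ f i) : κ • 1 ≤ diagonal f := by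
  rw [Matrix.le_iff, smul_one_eq_diagonal, diagonal_sub]
  exact .diagonal fun i => sub_nonneg.mpr (hf i)

end LoewnerOrder

section Constraints

open scoped MatrixOrder

variable {N₀ N : ℕ}

theorem F2_eq_vecMulVec (L : Fin N₀ → ℝ) (Ct : Fin (N - N₀) → ℝ) :
    F2 N₀ N L Ct = vecMulVec (Lv N₀ L) Ct := by
  ext i j
  rcases i with i | i <;> simp [F2, Lv, vecMulVec_apply]

theorem Erow_dotProduct_self (F : Matrix (Fin N₀ ⊕ Fin N₀) (Fin N₀ ⊕ Fin N₀) ℝ)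
    (l k : Fin N₀ ⊕ Fin N₀ → ℝ) (Ct : Fin (N - N₀) → ℝ) :
    Erow N₀ N F (vecMulVec l Ct) l k ⬝ᵥ Erow N₀ N F (vecMulVec l Ct) l k
      = (k ᵥ* F) ⬝ᵥ (k ᵥ* F) + (k ⬝ᵥ l) ^ 2 * (Ct ⬝ᵥ Ct + 1) := by
  simp only [Erow, vecMul_vecMulVec, sumElim_dotProduct_sumElim, dotProduct_smul, smul_dotProduct,
    smul_eq_mul]
  simp only [dotProduct, Finset.univ_unique, Finset.sum_const, Finset.card_singleton, one_smul]
  ring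

variable {P Q1 F : Matrix (Fin N₀ ⊕ Fin N₀) (Fin N₀ ⊕ Fin N₀) ℝ}
  {Q2 F3 : Matrix (Fin (N - N₀)) (Fin (N - N₀)) ℝ} {l k : Fin N₀ ⊕ Fin N₀ → ℝ}
  {Ct : Fin (N - N₀) → ℝ} {E : SIdx N₀ N → ℝ} {c r₁ βs γ α₂ α₃ α₄ a b d : ℝ}

theorem neg_PsiM_eq :
    -PsiM N₀ N P Q1 F Q2 F3 (vecMulVec l Ct) l k E c r₁ βs γ α₂ α₃ a b
      = fromBlocks
          (fromBlocks
            (-(Fᵀ * P + P * F + |c| • P + Q1) - (α₂ * γ * a) • vecMulVec k k)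
            (vecMulVec (-(P *ᵥ l)) Ct) (vecMulVec Ct (-(P *ᵥ l)))
            (-(r₁ • ((2 : ℝ) • F3 + |c| • 1) + Q2)))
          (vecMulVec (Sum.elim (-(P *ᵥ l)) 0) 1) (vecMulVec 1 (Sum.elim (-(P *ᵥ l)) 0)) (βs • 1)
        - (2 * α₃ * γ * b) • vecMulVec E E := by
  rw [PsiM, mul_vecMulVec, transpose_vecMulVec, neg_add, ← sub_eq_add_neg, fromBlocks_neg,
    fromBlocks_neg, neg_add _ (_ • vecMulVec k k), ← sub_eq_add_neg, ← neg_vecMulVec,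
    ← vecMulVec_neg]
  congr 2 <;> ext i j <;> rcases i with i | i <;> rcases j with j | j <;>
    simp [vecMulVec_apply]

theorem posDef_neg_PsiM
    (hF : (4 : ℝ) • 1 ≤ -(Fᵀ * P + P * F + |c| • P + Q1))
    (hF3 : d • 1 ≤ -(r₁ • ((2 : ℝ) • F3 + |c| • 1) + Q2))
    (hd : ((P *ᵥ l) ⬝ᵥ (P *ᵥ l)) * (Ct ⬝ᵥ Ct) ≤ d - 2)
    (hβ : (P *ᵥ l) ⬝ᵥ (P *ᵥ l) ≤ βs - 1)
    (ha : |α₂ * γ * a| * (k ⬝ᵥ k) ≤ 1) (hb : |2 * α₃ * γ * b| * (E ⬝ᵥ E) < 1) :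
    (-PsiM N₀ N P Q1 F Q2 F3 (vecMulVec l Ct) l k E c r₁ βs γ α₂ α₃ a b).PosDef := by
  have hPl : 0 ≤ (P *ᵥ l) ⬝ᵥ (P *ᵥ l) := by simpa using dotProduct_star_self_nonneg (P *ᵥ l)
  have hCt : 0 ≤ Ct ⬝ᵥ Ct := by simpa using dotProduct_star_self_nonneg Ct
  -- The coercivity constant drops from `4` to `3`, `2` and `1` as the `K̃ᵀK̃` term, the `F₂` block
  -- and the `ℒ` column are absorbed.
  have hA := sub_smul_one_le_sub_smul_vecMulVec_self hF ha
  have hinner := smul_one_le_fromBlocks_vecMulVec (κ := 2) (g := -(P *ᵥ l)) (h := Ct) hA hF3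
    (by norm_num) (by linarith [mul_nonneg hPl hCt])
    (by rw [neg_dotProduct_neg]; linarith)
  have houter := smul_one_le_fromBlocks_vecMulVec (κ := 1) (g := Sum.elim (-(P *ᵥ l)) 0) (h := 1)
    hinner (le_refl (βs • (1 : Matrix Unit Unit ℝ))) (by norm_num) (by linarith)
    (by
      simp only [sumElim_dotProduct_sumElim, neg_dotProduct_neg, zero_dotProduct,
        one_dotProduct_one, Fintype.card_unit, Nat.cast_one]
      linarith)
  rw [neg_PsiM_eq]
  exact posDef_of_smul_one_le (sub_pos.mpr hb)
    (sub_smul_one_le_sub_smul_vecMulVec_self houter le_rfl)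

theorem posDef_neg_Theta1 (hb : |(2 * α₃ * |c| + α₄) * γ * |c| * b| * (k ⬝ᵥ k) < 1) :
    (-Theta1 N₀ P (|c| • P + 1) k c γ α₃ α₄ b).PosDef := by
  have h : -Theta1 N₀ P (|c| • P + 1) k c γ α₃ α₄ b
      = (1 : ℝ) • 1 - ((2 * α₃ * |c| + α₄) * γ * |c| * b) • vecMulVec k k := by
    rw [Theta1]
    module
  rw [h]
  exact posDef_of_smul_one_le (sub_pos.mpr hb)
    (sub_smul_one_le_sub_smul_vecMulVec_self le_rfl le_rfl)

theorem neg_Theta2_eq : -Theta2 N₀ N ((r₁ * |c| + d) • 1) r₁ c = d • 1 := by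
  rw [Theta2]
  module

theorem smul_one_le_neg_smul_A1_add {lam : ℕ → ℝ} {q_c η : ℝ} (hr₁ : 0 ≤ r₁) (hd : d ≤ r₁ * η)
    (hgap : ∀ n ≥ N₀ + 1, η ≤ lam n - q_c - |c|) :
    d • 1 ≤ -(r₁ • ((2 : ℝ) • A1 N₀ N lam q_c + |c| • 1) + (r₁ * |c| + d) • 1) := by
  have h : -(r₁ • ((2 : ℝ) • A1 N₀ N lam q_c + |c| • 1) + (r₁ * |c| + d) • 1)
      = diagonal fun i : Fin (N - N₀) => 2 * r₁ * (lam (N₀ + i + 1) - q_c - |c|) - d := by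
    simp only [A1, smul_one_eq_diagonal, diagonal_add, ← diagonal_smul, diagonal_neg]
    congr 1
    ext i
    simp only [Pi.smul_apply, smul_eq_mul]
    ring
  rw [h]
  refine smul_one_le_diagonal fun i => ?_
  nlinarith [mul_le_mul_of_nonneg_left (hgap (N₀ + i + 1) (by lia)) hr₁]

end Constraints

/-- The row `C̃₁` of weighted traces, for a trace sequence `y n = φₙ(0)`. -/
def C1t (N₀ N : ℕ) (lam y : ℕ → ℝ) : Fin (N - N₀) → ℝ :=
  fun i => y (N₀ + i + 1) / √(lam (N₀ + i + 1))

/-- Feasibility of the constraints `Ψ ≺ 0`, `Θ₁ ≺ 0`, `Θ₂ ≺ 0`, `Θ₃ < 0`, `Θ₄ < 0` of order `N`.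
The eigenfunctions enter only through the traces `y n = φₙ(0)` and the squared residual norms
`a = ‖R_N a‖²`, `b = ‖R_N b‖²`. -/
def LMIFeasible (N₀ N : ℕ) (lam y : ℕ → ℝ) (q_c c : ℝ) (K L : Fin N₀ → ℝ)
    (F : Matrix (Fin N₀ ⊕ Fin N₀) (Fin N₀ ⊕ Fin N₀) ℝ) (α₁ α₂ α₃ α₄ cf a b : ℝ) : Prop :=
  ∃ (P Q1 : Matrix (Fin N₀ ⊕ Fin N₀) (Fin N₀ ⊕ Fin N₀) ℝ)
    (Q2 : Matrix (Fin (N - N₀)) (Fin (N - N₀)) ℝ) (r₁ r₂ βs γ : ℝ),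
    P.PosDef ∧ Q1.PosSemidef ∧ Q2.PosSemidef ∧ 0 < r₁ ∧ 0 < r₂ ∧ 0 < βs ∧ 0 < γ ∧
    (-PsiM N₀ N P Q1 F Q2 (A1 N₀ N lam q_c) (F2 N₀ N L (C1t N₀ N lam y)) (Lv N₀ L) (Kt N₀ K)
      (Erow N₀ N F (F2 N₀ N L (C1t N₀ N lam y)) (Lv N₀ L) (Kt N₀ K))
      c r₁ βs γ α₂ α₃ a b).PosDef ∧
    (-Theta1 N₀ P Q1 (Kt N₀ K) c γ α₃ α₄ b).PosDef ∧
    (-Theta2 N₀ N Q2 r₁ c).PosDef ∧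
    γ * α₁ * |c| - r₂ < 0 ∧
    2 * γ * (-cf * lam (N + 1) + q_c) + βs * (∑' k : ℕ, y (N + 1 + k) ^ 2 / lam (N + 1 + k))
      + r₂ / lam (N + 1) < 0

section Feasibility

open Filter Topology
open scoped MatrixOrder

variable {N₀ N : ℕ} {lam y : ℕ → ℝ} {q_c c η M : ℝ} {K L : Fin N₀ → ℝ}
  {P F : Matrix (Fin N₀ ⊕ Fin N₀) (Fin N₀ ⊕ Fin N₀) ℝ} {α₁ α₂ α₃ α₄ cf a b : ℝ}

theorem lmiFeasible_of_bounds (hP : P.PosDef)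
    (hlyap : (5 : ℝ) • 1 ≤ -(Fᵀ * P + P * F + (2 * |c|) • P)) (hη : 0 < η)
    (hgap : ∀ n ≥ N₀ + 1, η ≤ lam n - q_c - |c|)
    (hM : C1t N₀ N lam y ⬝ᵥ C1t N₀ N lam y ≤ M)
    (ha : |α₂ * a| * (Kt N₀ K ⬝ᵥ Kt N₀ K) ≤ 1)
    (hb : |2 * α₃ * b| * ((Kt N₀ K ᵥ* F) ⬝ᵥ (Kt N₀ K ᵥ* F)
      + (Kt N₀ K ⬝ᵥ Lv N₀ L) ^ 2 * (M + 1)) < 1)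
    (hb' : |(2 * α₃ * |c| + α₄) * |c| * b| * (Kt N₀ K ⬝ᵥ Kt N₀ K) < 1)
    (hΘ₄ : 2 * (-cf * lam (N + 1) + q_c)
      + ((P *ᵥ Lv N₀ L) ⬝ᵥ (P *ᵥ Lv N₀ L) + 1)
        * (∑' k : ℕ, y (N + 1 + k) ^ 2 / lam (N + 1 + k))
      + (|α₁| * |c| + 1) / lam (N + 1) < 0) :
    LMIFeasible N₀ N lam y q_c c K L F α₁ α₂ α₃ α₄ cf a b := by
  set s := (P *ᵥ Lv N₀ L) ⬝ᵥ (P *ᵥ Lv N₀ L)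
  have hs : 0 ≤ s := by simpa using dotProduct_star_self_nonneg (P *ᵥ Lv N₀ L)
  have hM₀ : 0 ≤ M :=
    le_trans (by simpa using dotProduct_star_self_nonneg (C1t N₀ N lam y)) hM
  set d := s * M + 2
  have hd : 0 < d := by positivity
  refine ⟨P, |c| • P + 1, ((d / η) * |c| + d) • 1, d / η, |α₁| * |c| + 1, s + 1, 1, hP,
    (hP.posSemidef.smul (abs_nonneg c)).add .one, .smul .one (by positivity), by positivity,
    by positivity, by positivity, one_pos, ?_, ?_, ?_, ?_, by simpa using hΘ₄⟩
  · rw [F2_eq_vecMulVec]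
    refine posDef_neg_PsiM ?_
      (smul_one_le_neg_smul_A1_add (by positivity) (by field_simp; rfl) hgap)
      ?_ (by simp [s]) (by simpa using ha) ?_
    · have h := sub_le_sub_right hlyap 1
      convert h using 1 <;> module
    · linarith [mul_le_mul_of_nonneg_left hM hs]
    · rw [Erow_dotProduct_self, mul_one]
      refine lt_of_le_of_lt ?_ hb
      gcongr
  · exact posDef_neg_Theta1 (by simpa using hb')
  · rw [neg_Theta2_eq]
    exact PosDef.one.smul hd
  · linarith [mul_le_mul_of_nonneg_right (le_abs_self α₁) (abs_nonneg c)]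

theorem exists_ge_forall_ge_le_of_tendsto_atTop {α : Type*} [LinearOrder α] {u : ℕ → α}
    (hu : Tendsto u atTop atTop) (n₀ : ℕ) : ∃ m ≥ n₀, ∀ n ≥ n₀, u m ≤ u n := by
  have hshift : Tendsto (fun n => u (n + n₀)) cofinite atTop := by
    rw [Nat.cofinite_eq_atTop]
    exact hu.comp (tendsto_add_atTop_nat n₀)
  obtain ⟨m, hm⟩ := hshift.exists_forall_le
  refine ⟨m + n₀, Nat.le_add_left n₀ m, fun n hn => ?_⟩
  simpa [Nat.sub_add_cancel hn] using hm (n - n₀)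

theorem C1t_dotProduct_self_le (hlam : ∀ n ≥ 1, 0 < lam n)
    (hsum : Summable fun k : ℕ => y (k + 1) ^ 2 / lam (k + 1)) (N₀ N : ℕ) :
    C1t N₀ N lam y ⬝ᵥ C1t N₀ N lam y ≤ ∑' k : ℕ, y (k + 1) ^ 2 / lam (k + 1) := by
  have hterm (i : Fin (N - N₀)) : C1t N₀ N lam y i * C1t N₀ N lam y i
      = y (N₀ + i + 1) ^ 2 / lam (N₀ + i + 1) := by
    rw [C1t, div_mul_div_comm, Real.mul_self_sqrt (hlam _ (by lia)).le, sq]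
  have h := tsum_comp_le_tsum_of_inj hsum
    (fun k => div_nonneg (sq_nonneg _) (hlam _ (by lia)).le)
    (i := fun i : Fin (N - N₀) => N₀ + (i : ℕ)) fun i j hij => Fin.ext (Nat.add_left_cancel hij)
  simpa [dotProduct, hterm, tsum_fintype] using h

/-- For a divergent series every tail has the junk value `0`. -/
theorem tendsto_tsum_nat_add_one_add {G : Type*} [AddCommGroup G] [TopologicalSpace G]
    [IsTopologicalAddGroup G] [T2Space G] (f : ℕ → G) :
    Tendsto (fun N => ∑' k, f (N + 1 + k)) atTop (𝓝 0) := by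
  simpa [Function.comp_def, add_comm] using
    (tendsto_sum_nat_add f).comp (tendsto_add_atTop_nat 1)

theorem tendsto_Theta4_atBot (hlam : Tendsto lam atTop atTop) (hcf : 0 < cf) (q_c βs r₂ : ℝ) :
    Tendsto (fun N => 2 * (-cf * lam (N + 1) + q_c)
      + βs * (∑' k : ℕ, y (N + 1 + k) ^ 2 / lam (N + 1 + k)) + r₂ / lam (N + 1)) atTop atBot := by
  have hshift : Tendsto (fun N => lam (N + 1)) atTop atTop :=
    hlam.comp (tendsto_add_atTop_nat 1)
  have hmain : Tendsto (fun N => 2 * (-cf * lam (N + 1) + q_c)) atTop atBot :=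
    (tendsto_atBot_add_const_right _ q_c
      (hshift.const_mul_atTop_of_neg (neg_lt_zero.mpr hcf))).const_mul_atBot two_pos
  have htail := (tendsto_tsum_nat_add_one_add fun n => y n ^ 2 / lam n).const_mul βs
  exact (hmain.atBot_add htail).atBot_add (hshift.const_div_atTop r₂)

theorem eventually_abs_mul_mul_lt_one {ι : Type*} {f : Filter ι} {u : ι → ℝ}
    (hu : Tendsto u f (𝓝 0)) (s t : ℝ) : ∀ᶠ i in f, |s * u i| * t < 1 := by
  have h : Tendsto (fun i => |s * u i| * t) f (𝓝 0) := by
    simpa using ((hu.const_mul s).abs).mul_const t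
  exact h.eventually_lt_const one_pos

theorem tendsto_RN2 (f : ℝ → ℝ) (phi : ℕ → ℝ → ℝ) : Tendsto (RN2 f phi) atTop (𝓝 0) :=
  tendsto_tsum_nat_add_one_add fun n => ip f (phi n) ^ 2

theorem stmt_16_general {N₀ : ℕ} {lam y : ℕ → ℝ} {q_c c : ℝ} {K L : Fin N₀ → ℝ}
    {F : Matrix (Fin N₀ ⊕ Fin N₀) (Fin N₀ ⊕ Fin N₀) ℝ} {α₁ α₂ α₃ α₄ cf : ℝ} {a b : ℕ → ℝ}
    (hlampos : ∀ n ≥ 1, 0 < lam n) (hlamtop : Tendsto lam atTop atTop)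
    (hsum : Summable fun k : ℕ => y (k + 1) ^ 2 / lam (k + 1))
    (hspec : ∀ n ≥ N₀ + 1, -lam n + q_c + |c| < 0)
    (hF : ∀ μ ∈ spectrum ℂ (F.map Complex.ofReal), μ.re < -|c|) (hcf : 0 < cf)
    (ha : Tendsto a atTop (𝓝 0)) (hb : Tendsto b atTop (𝓝 0)) :
    ∀ᶠ N in atTop, LMIFeasible N₀ N lam y q_c c K L F α₁ α₂ α₃ α₄ cf (a N) (b N) := by
  obtain ⟨P, hP, hlyap⟩ := exists_posDef_smul_one_le_lyapunov hF (by norm_num : (0 : ℝ) < 5)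
  have hgaptop : Tendsto (fun n => lam n - q_c - |c|) atTop atTop :=
    tendsto_atTop_add_const_right _ _ (tendsto_atTop_add_const_right _ _ hlamtop)
  obtain ⟨m, hm, hgap⟩ := exists_ge_forall_ge_le_of_tendsto_atTop hgaptop (N₀ + 1)
  have hη : 0 < lam m - q_c - |c| := by linarith [hspec m hm]
  filter_upwards [eventually_abs_mul_mul_lt_one ha α₂ _,
    eventually_abs_mul_mul_lt_one hb (2 * α₃) _,
    eventually_abs_mul_mul_lt_one hb ((2 * α₃ * |c| + α₄) * |c|) _,
    (tendsto_Theta4_atBot hlamtop hcf q_c _ _).eventually_lt_atBot 0] with N haN hbN hbN' hΘ₄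
  exact lmiFeasible_of_bounds hP hlyap hη hgap (C1t_dotProduct_self_le hlampos hsum N₀ N)
    haN.le hbN hbN' hΘ₄

end Feasibility

/-- Theorem 1 (feasibility), Dirichlet measurement: with gains `K`, `L` placing all
eigenvalues of `F₁` in `{Re μ < -|c|}` and Young parameters with `𝔠 > 0`, the constraints
`Ψ ≺ 0`, `Θ₁ ≺ 0`, `Θ₂ ≺ 0`, `Θ₃ < 0`, `Θ₄ < 0` are feasible for all `N` large enough. -/
theorem stmt_16
    (θ₁ θ₂ : ℝ) (hθ₁ : θ₁ ∈ Set.Ioc 0 (π/2)) (hθ₂ : θ₂ ∈ Set.Icc 0 (π/2))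
    (p q qt : ℝ → ℝ) (q_c c : ℝ) (hc : c ≠ 0)
    (hp : ContDiffOn ℝ 2 p (Set.Icc 0 1)) (hppos : ∀ x ∈ Set.Icc (0:ℝ) 1, 0 < p x)
    (hqc : ContinuousOn q (Set.Icc 0 1)) (hqpos : ∀ x ∈ Set.Icc (0:ℝ) 1, 0 < q x)
    (hqt : ∀ x, qt x = q x - q_c)
    -- eigenstructure of the Sturm–Liouville operator A f = -(p f')' + q f
    (lam : ℕ → ℝ) (phi : ℕ → ℝ → ℝ)
    (hlampos : ∀ n ≥ 1, 0 < lam n)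
    (hlammono : ∀ n ≥ 1, lam n < lam (n+1))
    (hlamtop : Filter.Tendsto lam Filter.atTop Filter.atTop)
    (hphireg : ∀ n ≥ 1, ContDiffOn ℝ 2 (phi n) (Set.Icc 0 1))
    (hphieig : ∀ n ≥ 1, ∀ x ∈ Set.Icc (0:ℝ) 1,
      -(dI (fun y => p y * dI (phi n) y) x) + q x * phi n x = lam n * phi n x)
    (hphibc : ∀ n ≥ 1,
      Real.cos θ₁ * phi n 0 - Real.sin θ₁ * dI (phi n) 0 = 0 ∧
      Real.cos θ₂ * phi n 1 + Real.sin θ₂ * dI (phi n) 1 = 0)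
    (horth : ∀ m ≥ 1, ∀ n ≥ 1, ip (phi m) (phi n) = if m = n then 1 else 0)
    (hparseval : ∀ f : ℝ → ℝ, ContinuousOn f (Set.Icc 0 1) →
      (∫ x in (0:ℝ)..1, (f x)^2) = ∑' k : ℕ, (ip f (phi (k+1)))^2)
    -- additional trace assumptions: sup |φₙ(0)| < ∞ and Σ φₙ(0)²/λₙ < ∞
    (hphibdd : ∃ Cb : ℝ, ∀ n ≥ 1, |phi n 0| ≤ Cb)
    (hMsum : Summable fun k : ℕ => (phi (k+1) 0)^2 / lam (k+1))
    -- dimensions and gains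
    (N₀ : ℕ) (hN₀ : 1 ≤ N₀)
    (hspec : ∀ n ≥ N₀ + 1, -lam n + q_c + |c| < 0)
    (K L : Fin N₀ → ℝ)
    (F1m : Matrix (Fin N₀ ⊕ Fin N₀) (Fin N₀ ⊕ Fin N₀) ℝ)
    (hF1m : F1m = F1 N₀ lam q_c (B0 N₀ p qt θ₂ q_c lam phi)
      (fun i => phi (i.val + 1) 0) K L)
    (hF1spec : ∀ μ : ℂ, μ ∈ spectrum ℂ (F1m.map (Complex.ofReal : ℝ → ℂ)) → μ.re < -|c|)
    -- Young parameters
    (α₁ α₂ α₃ α₄ cf : ℝ) (hα₁ : 0 < α₁) (hα₂ : 0 < α₂) (hα₃ : 0 < α₃) (hα₄ : 0 < α₄)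
    (hcf : cf = 1 - (|c|/α₁ + 1/α₂ + 1/α₃ + |c|/α₄)/2) (hcfpos : 0 < cf) :
    ∃ N₁ : ℕ, N₀ + 1 ≤ N₁ ∧ ∀ N ≥ N₁,
      ∃ (P Q1 : Matrix (Fin N₀ ⊕ Fin N₀) (Fin N₀ ⊕ Fin N₀) ℝ)
        (Q2 : Matrix (Fin (N - N₀)) (Fin (N - N₀)) ℝ) (r₁ r₂ βs γ : ℝ),
        P.PosDef ∧ Q1.PosSemidef ∧ Q2.PosSemidef ∧
        0 < r₁ ∧ 0 < r₂ ∧ 0 < βs ∧ 0 < γ ∧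
        (-(PsiM N₀ N P Q1 F1m Q2 (A1 N₀ N lam q_c)
            (F2 N₀ N L
              (fun i => phi (N₀ + i.val + 1) 0 / Real.sqrt (lam (N₀ + i.val + 1))))
            (Lv N₀ L) (Kt N₀ K)
            (Erow N₀ N F1m
              (F2 N₀ N L
                (fun i => phi (N₀ + i.val + 1) 0 / Real.sqrt (lam (N₀ + i.val + 1))))
              (Lv N₀ L) (Kt N₀ K))
            c r₁ βs γ α₂ α₃ (RN2 (aFun p qt θ₂) phi N) (RN2 (bFun θ₂) phi N))).PosDef ∧
        (-(Theta1 N₀ P Q1 (Kt N₀ K) c γ α₃ α₄ (RN2 (bFun θ₂) phi N))).PosDef ∧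
        (-(Theta2 N₀ N Q2 r₁ c)).PosDef ∧
        γ * α₁ * |c| - r₂ < 0 ∧
        2*γ*(-cf * lam (N+1) + q_c)
            + βs * (∑' k : ℕ, (phi (N + 1 + k) 0)^2 / lam (N + 1 + k))
            + r₂ / lam (N+1) < 0 := by
  obtain ⟨N₁, hN₁⟩ := Filter.eventually_atTop.mp <|
    stmt_16_general (N₀ := N₀) (y := fun n => phi n 0) (K := K) (L := L) (α₁ := α₁) (α₂ := α₂)
      (α₃ := α₃) (α₄ := α₄) hlampos hlamtop hMsum hspec hF1spec hcfpos
      (tendsto_RN2 (aFun p qt θ₂) phi) (tendsto_RN2 (bFun θ₂) phi)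
  exact ⟨max (N₀ + 1) N₁, le_max_left _ _, fun N hN => hN₁ N ((le_max_right _ _).trans hN)⟩

end
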